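/- arXiv:1502.05459 — 2 statements merged into one kernel-verified Lean document; each statement's English description precedes it below -/
import Mathlib

section
/- (Abel–Spence five-term relation) For all real numbers x, y with 0 < y < x < 1: Li₂(x) − Li₂(y) + Li₂(y/x) − Li₂( y(1−x)/(x(1−y)) ) + Li₂( (1−x)/(1−y) ) − Li₂(1) + log(x)·log( (1−x)/(1−y) ) = 0. (Each dilogarithm argument lies in (0,1].) -/
/-!
For fixed `x`, differentiate the left-hand side in `y` on `[y, x)`. As `Li₂'(z) = -log (1 - z) / z`
and each of `1 - y / x`, `1 - y(1-x)/(x(1-y))`, `1 - (1-x)/(1-y)` is a product of powers of `x`,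
`x - y` and `1 - y`, the derivative is a combination of `log x`, `log (x - y)` and `log (1 - y)`
with rational coefficients, all of which cancel. So the left-hand side is constant in `y`
on `[y, x]`; at `y = x` every term cancels, because three of the arguments are equal to `1`.
The endpoint `y = x` is reached because `Li₂` is continuous on all of `[0, 1]`
(`continuousOn_Li2`), the singularity of the integrand at `1` being logarithmic.
-/

/-- The real dilogarithm `Li₂(x) := −∫₀ˣ log(1−t)/t dt`, for `x ∈ (−∞, 1]`. -/
noncomputable def Li2 (x : ℝ) : ℝ := -∫ t in (0:ℝ)..x, Real.log (1 - t) / t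

open Set MeasureTheory

/-- The integrand is dominated by `2 + 2 |log (1 - t)|`: near `0` because `log (1 - t) = O(t)`,
away from `0` because `1 / t ≤ 2`. -/
lemma intervalIntegrable_Li2 :
    IntervalIntegrable (fun t : ℝ => Real.log (1 - t) / t) volume 0 1 := by
  have hlog : IntervalIntegrable (fun t : ℝ => Real.log (1 - t)) volume 0 1 := by
    have h : IntervalIntegrable Real.log volume (1 - 0) (1 - 1) :=
      intervalIntegral.intervalIntegrable_log'
    simpa using h.comp_sub_left 1
  have hdom : IntervalIntegrable (fun t : ℝ => 2 + 2 * |Real.log (1 - t)|) volume 0 1 :=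
    intervalIntegrable_const.add (hlog.abs.const_mul 2)
  have hmeas : Measurable (fun t : ℝ => Real.log (1 - t) / t) := by fun_prop
  refine hdom.mono_fun' hmeas.aestronglyMeasurable ?_
  refine (ae_restrict_iff' measurableSet_uIoc).2 (Filter.Eventually.of_forall fun t ht => ?_)
  rw [uIoc_of_le zero_le_one] at ht
  obtain ⟨h0, h1⟩ := ht
  change ‖Real.log (1 - t) / t‖ ≤ 2 + 2 * |Real.log (1 - t)|
  rw [Real.norm_eq_abs, abs_div, abs_of_pos h0, div_le_iff₀ h0]
  have hL := abs_nonneg (Real.log (1 - t))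
  rcases le_total t (1 / 2) with h | h
  · have hpos : 0 < 1 - t := by linarith
    have hle : Real.log (1 - t) ≤ 0 := Real.log_nonpos hpos.le (by linarith)
    have hinv := Real.one_sub_inv_le_log_of_pos hpos
    have hinv' : (1 - t)⁻¹ ≤ 1 + 2 * t := by
      rw [inv_le_iff_one_le_mul₀ hpos]
      nlinarith
    have : |Real.log (1 - t)| ≤ 2 * t := by
      rw [abs_of_nonpos hle]
      linarith
    nlinarith [mul_nonneg hL h0.le]
  · nlinarith [mul_nonneg hL (sub_nonneg.2 h)]

lemma continuousOn_Li2 : ContinuousOn Li2 (Icc 0 1) := by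
  have h := intervalIntegral.continuousOn_primitive_interval'
    (intervalIntegrable_Li2) (left_mem_uIcc)
  rw [uIcc_of_le zero_le_one] at h
  have e : Li2 = -fun z => ∫ t in (0:ℝ)..z, Real.log (1 - t) / t := rfl
  rw [e]
  exact h.neg

lemma hasDerivAt_Li2 {z : ℝ} (h0 : 0 < z) (h1 : z < 1) :
    HasDerivAt Li2 (-(Real.log (1 - z) / z)) z := by
  have hint : IntervalIntegrable (fun t : ℝ => Real.log (1 - t) / t) volume 0 z :=
    intervalIntegrable_Li2.mono_set (by
      rw [uIcc_of_le h0.le, uIcc_of_le zero_le_one]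
      exact Icc_subset_Icc le_rfl h1.le)
  have hmeas : Measurable (fun t : ℝ => Real.log (1 - t) / t) := by fun_prop
  have hcont : ContinuousAt (fun t : ℝ => Real.log (1 - t) / t) z :=
    ContinuousAt.div (ContinuousAt.log (by fun_prop) (by linarith)) continuousAt_id h0.ne'
  have e : Li2 = -fun z => ∫ t in (0:ℝ)..z, Real.log (1 - t) / t := rfl
  rw [e]
  exact (intervalIntegral.integral_hasDerivAt_right hint
    hmeas.stronglyMeasurable.stronglyMeasurableAtFilter hcont).neg

/-- The left-hand side of the five-term relation, as a function of `s = y`, has zero derivative. -/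
lemma hasDerivAt_fiveTerm {x s : ℝ} (hs : 0 < s) (hsx : s < x) (hx : x < 1) :
    HasDerivAt (fun s => Li2 x - Li2 s + Li2 (s / x) - Li2 (s * (1 - x) / (x * (1 - s)))
      + Li2 ((1 - x) / (1 - s)) - Li2 1
      + Real.log x * Real.log ((1 - x) / (1 - s))) 0 s := by
  have hx0 : 0 < x := hs.trans hsx
  have hs1 : 0 < 1 - s := by linarith
  have hx1 : 0 < 1 - x := by linarith
  have hxs : 0 < x - s := by linarith
  have eu : 1 - s * (1 - x) / (x * (1 - s)) = (x - s) / (x * (1 - s)) := by field_simp; ring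
  have ev : 1 - (1 - x) / (1 - s) = (x - s) / (1 - s) := by field_simp; ring
  have ew : 1 - s / x = (x - s) / x := by field_simp
  have hu1 : s * (1 - x) / (x * (1 - s)) < 1 := by
    have : 0 < (x - s) / (x * (1 - s)) := by positivity
    linarith
  have hv1 : (1 - x) / (1 - s) < 1 := by
    have : 0 < (x - s) / (1 - s) := by positivity
    linarith
  have hw1 : s / x < 1 := (div_lt_one hx0).2 hsx
  have d1 : HasDerivAt (fun s : ℝ => 1 - s) (-1) s := by
    simpa using (hasDerivAt_id s).const_sub 1
  have dw : HasDerivAt (fun s : ℝ => s / x) (1 / x) s := (hasDerivAt_id s).div_const x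
  have du := ((hasDerivAt_id s).mul_const (1 - x)).fun_div (d1.const_mul x)
    (mul_pos hx0 hs1).ne'
  have dv := (hasDerivAt_const s (1 - x)).fun_div d1 hs1.ne'
  have hv0 : 0 < (1 - x) / (1 - s) := by positivity
  have h1 := hasDerivAt_Li2 hs (hsx.trans hx)
  have hw := (hasDerivAt_Li2 (by positivity) hw1).comp s dw
  have hu := (hasDerivAt_Li2 (by positivity) hu1).comp s du
  have hv := (hasDerivAt_Li2 hv0 hv1).comp s dv
  have hl := (dv.log hv0.ne').const_mul (Real.log x)
  have key := (((((h1.const_sub (Li2 x)).add hw).sub hu).add hv).sub_const (Li2 1)).add hl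
  refine key.congr_deriv ?_
  simp only [id_eq]
  rw [eu, ev, ew, Real.log_div hxs.ne' (mul_pos hx0 hs1).ne', Real.log_div hxs.ne' hs1.ne',
    Real.log_div hxs.ne' hx0.ne', Real.log_mul hx0.ne' hs1.ne']
  generalize Real.log (x - s) = A
  generalize Real.log (1 - s) = B
  generalize Real.log x = C
  field_simp
  ring

/-- The Abel–Spence five-term relation for the dilogarithm. -/
theorem abel_spence (x y : ℝ) (hy : 0 < y) (hyx : y < x) (hx : x < 1) :
    Li2 x - Li2 y + Li2 (y / x) - Li2 (y * (1 - x) / (x * (1 - y)))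
      + Li2 ((1 - x) / (1 - y)) - Li2 1
      + Real.log x * Real.log ((1 - x) / (1 - y)) = 0 := by
  have hx0 : 0 < x := hy.trans hyx
  have hx1 : 0 < 1 - x := by linarith
  have hpos : ∀ s ∈ Icc y x, 0 < s ∧ 0 < 1 - s := fun s hs =>
    ⟨by linarith [hs.1], by linarith [hs.2]⟩
  have hcu : ContinuousOn (fun s => Li2 (s * (1 - x) / (x * (1 - s)))) (Icc y x) := by
    refine continuousOn_Li2.comp (ContinuousOn.div (by fun_prop) (by fun_prop)
      fun s hs => (mul_pos hx0 (hpos s hs).2).ne') fun s hs => ?_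
    obtain ⟨h0, h1⟩ := hpos s hs
    exact ⟨by positivity, (div_le_one (by positivity)).2 (by nlinarith [hs.2])⟩
  have hcv' : ContinuousOn (fun s => (1 - x) / (1 - s)) (Icc y x) :=
    ContinuousOn.div (by fun_prop) (by fun_prop) fun s hs => (hpos s hs).2.ne'
  have hcv : ContinuousOn (fun s => Li2 ((1 - x) / (1 - s))) (Icc y x) := by
    refine continuousOn_Li2.comp hcv' fun s hs => ?_
    obtain ⟨h0, h1⟩ := hpos s hs
    exact ⟨by positivity, (div_le_one h1).2 (by linarith [hs.2])⟩
  have hcw : ContinuousOn (fun s => Li2 (s / x)) (Icc y x) := by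
    refine continuousOn_Li2.comp (by fun_prop) fun s hs => ?_
    obtain ⟨h0, h1⟩ := hpos s hs
    exact ⟨by positivity, (div_le_one hx0).2 hs.2⟩
  have hc1 : ContinuousOn Li2 (Icc y x) :=
    continuousOn_Li2.mono (Icc_subset_Icc hy.le hx.le)
  have hcl : ContinuousOn (fun s => Real.log ((1 - x) / (1 - s))) (Icc y x) :=
    hcv'.log fun s hs => (div_pos hx1 (hpos s hs).2).ne'
  have hconst := constant_of_has_deriv_right_zero
    (f := fun s => Li2 x - Li2 s + Li2 (s / x) - Li2 (s * (1 - x) / (x * (1 - s)))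
      + Li2 ((1 - x) / (1 - s)) - Li2 1 + Real.log x * Real.log ((1 - x) / (1 - s)))
    (by fun_prop)
    (fun s hs => (hasDerivAt_fiveTerm (hy.trans_le hs.1) hs.2 hx).hasDerivWithinAt)
    x (right_mem_Icc.2 hyx.le)
  rw [← hconst, div_self hx0.ne', div_self hx1.ne', div_self (mul_pos hx0 hx1).ne', Real.log_one]
  ring
end

section
/- For all reals a > b > 0 and every y ∈ (0,1), the function G(y) := −Li₃(y) + Li₃(b·y/a) − log(y)·Li₂(b·y/a) − (1/2)·(log y)²·log(1 − b·y/a) + Li₂(y)·log(y) + (1/2)·log(1−y)·(log y)² is differentiable at y with derivative G′(y) = −(a − b)·(log y)² / ( 2·(1 − y)·(a − b·y) ). -/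
/-- The real trilogarithm `Li₃(x) := ∫₀ˣ Li₂(t)/t dt`. -/
noncomputable def Li3 (x : ℝ) : ℝ := ∫ t in (0:ℝ)..x, Li2 t / t

open Set Filter Topology MeasureTheory in
/-- Fundamental theorem of calculus for an integrand `f t / t` with a removable singularity at `0`:
the derivative is `dslope f 0`, that is `f x / x` for `x ≠ 0` and `f' 0` at `0`. -/
theorem hasDerivAt_integral_div {f : ℝ → ℝ} (h0 : f 0 = 0)
    (hf : ∀ x < 1, DifferentiableAt ℝ f x) {x : ℝ} (hx : x < 1) :
    HasDerivAt (fun x => ∫ t in (0:ℝ)..x, f t / t) (dslope f 0 x) x := by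
  have hc : ContinuousOn (dslope f 0) (Iio 1) :=
    (continuousOn_dslope (Iio_mem_nhds one_pos)).2
      ⟨fun t ht => (hf t ht).continuousAt.continuousWithinAt, hf 0 one_pos⟩
  have heq : (fun x => ∫ t in (0:ℝ)..x, f t / t) = fun x => ∫ t in (0:ℝ)..x, dslope f 0 t := by
    funext x
    refine intervalIntegral.integral_congr_ae ?_
    filter_upwards [Measure.ae_ne volume (0:ℝ)] with t ht _
    simp [dslope_of_ne f ht, slope_def_field, h0]
  rw [heq]
  have hsub : uIcc 0 x ⊆ Iio (1:ℝ) := ordConnected_Iio.uIcc_subset one_pos hx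
  exact intervalIntegral.integral_hasDerivAt_right (hc.mono hsub).intervalIntegrable
    (hc.stronglyMeasurableAtFilter isOpen_Iio x hx) (hc.continuousAt (Iio_mem_nhds hx))

theorem dslope_zero_eq_div {f : ℝ → ℝ} (h0 : f 0 = 0) {x : ℝ} (hx : x ≠ 0) :
    dslope f 0 x = f x / x := by
  simp [dslope_of_ne f hx, slope_def_field, h0]

/-- The form of the derivative valid also at `x = 0`, as needed to treat `Li3`. -/
theorem hasDerivAt_Li2_dslope {x : ℝ} (hx : x < 1) :
    HasDerivAt Li2 (-dslope (fun t => Real.log (1 - t)) 0 x) x := by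
  refine (hasDerivAt_integral_div (by simp) (fun t ht => ?_) hx).neg
  exact (differentiableAt_id.const_sub 1).log (sub_pos.2 ht).ne'

theorem hasDerivAt_Li2_s15 {x : ℝ} (hx : x < 1) (hx0 : x ≠ 0) :
    HasDerivAt Li2 (-(Real.log (1 - x) / x)) x := by
  have h := hasDerivAt_Li2_dslope hx
  rwa [dslope_zero_eq_div (by simp) hx0] at h

theorem hasDerivAt_Li3 {x : ℝ} (hx : x < 1) (hx0 : x ≠ 0) :
    HasDerivAt Li3 (Li2 x / x) x := by
  have h0 : Li2 0 = 0 := by simp [Li2]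
  have h := hasDerivAt_integral_div h0
    (fun t ht => (hasDerivAt_Li2_dslope ht).differentiableAt) hx
  rwa [dslope_zero_eq_div h0 hx0] at h

/-- For `a > b > 0` and `y ∈ (0,1)`, the function
`G(y) = −Li₃(y) + Li₃(by/a) − log(y)·Li₂(by/a) − (1/2)·log²(y)·log(1−by/a)
        + Li₂(y)·log(y) + (1/2)·log(1−y)·log²(y)`
has derivative `−(a−b)·log²(y)/(2(1−y)(a−by))` at `y`. -/
theorem hasDerivAt_trilog_primitive' (a b : ℝ) (hb : 0 < b) (hab : b < a)
    (y : ℝ) (hy0 : 0 < y) (hy1 : y < 1) :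
    HasDerivAt (fun y : ℝ =>
        -Li3 y + Li3 (b * y / a) - Real.log y * Li2 (b * y / a)
          - (1 / 2) * (Real.log y) ^ 2 * Real.log (1 - b * y / a)
          + Li2 y * Real.log y + (1 / 2) * Real.log (1 - y) * (Real.log y) ^ 2)
      (-(a - b) * (Real.log y) ^ 2 / (2 * (1 - y) * (a - b * y))) y := by
  have ha : 0 < a := hb.trans hab
  have hlt : b * y < a := by nlinarith
  have hz1 : b * y / a < 1 := (div_lt_one ha).2 hlt
  have hz0 : b * y / a ≠ 0 := by positivity
  have h1y : 1 - y ≠ 0 := (sub_pos.2 hy1).ne'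
  have h1z : 1 - b * y / a ≠ 0 := (sub_pos.2 hz1).ne'
  have haby : a - b * y ≠ 0 := (sub_pos.2 hlt).ne'
  have haby' : a - y * b ≠ 0 := by rwa [mul_comm y b]
  have hz : HasDerivAt (fun y : ℝ => b * y / a) (b / a) y := by
    simpa using ((hasDerivAt_id y).const_mul b).div_const a
  have hlog := Real.hasDerivAt_log hy0.ne'
  have hL2 := hasDerivAt_Li2_s15 hy1 hy0.ne'
  have hL3 := hasDerivAt_Li3 hy1 hy0.ne'
  have hL2z : HasDerivAt (fun y : ℝ => Li2 (b * y / a)) _ y :=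
    HasDerivAt.comp (h₂ := Li2) y (hasDerivAt_Li2_s15 hz1 hz0) hz
  have hL3z : HasDerivAt (fun y : ℝ => Li3 (b * y / a)) _ y :=
    HasDerivAt.comp (h₂ := Li3) y (hasDerivAt_Li3 hz1 hz0) hz
  have hlogz := (hz.const_sub 1).log h1z
  have hlog1 := ((hasDerivAt_id' y).const_sub 1).log h1y
  have H := ((((hL3.neg.add hL3z).sub (hlog.mul hL2z)).sub
    (((hlog.pow 2).const_mul (1 / 2)).mul hlogz)).add (hL2.mul hlog)).add
    ((hlog1.const_mul (1 / 2)).mul (hlog.pow 2))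
  refine H.congr_deriv ?_
  -- With the logarithms and dilogarithms as opaque symbols, a rational-function identity remains.
  have hq : -(b / a) / (1 - b * y / a) = -b / (a - b * y) := by
    field_simp
  rw [hq]
  simp only [Pi.pow_apply]
  generalize Real.log (1 - b * y / a) = l1
  generalize Li2 (b * y / a) = d1
  generalize Real.log (1 - y) = l2
  generalize Li2 y = d2
  generalize Real.log y = l
  field_simp
  ring
end
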